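/- Let Φ be of type B_n, C_n, or D_n, let I ⊆ Δ be standard, and let λ be an integral Φ_I-regular weight with Φ_{λ̄} = Φ_J. Let 1 ≤ i ≤ n with a := |λ_i| ≠ 0, and let 1 ≤ s ≤ m be such that q_{s−1} < i ≤ q_s. If there exists 1 ≤ t ≤ m such that (1) n_s^λ(a) = 1, (2) n_s^λ(0) + n_t^λ(0) = 1, and (3) 1 ≤ n_t^λ(0) + n_t^λ(a) ≤ 2, then λ ⟷ s_{e_i}λ. -/

import Mathlib

namespace JantzenBlocks

open scoped Classical

/-- The three classical types `B`, `C`, `D`. -/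
inductive CType : Type
  | B | C | D
deriving DecidableEq

/-- The weight space `ℝ^n`. -/
abbrev V (n : ℕ) := Fin n → ℝ

noncomputable section

/-- The standard inner product on `ℝ^n`. -/
def inn {n : ℕ} (x y : V n) : ℝ := ∑ i, x i * y i

/-- The standard basis vector `e i`. -/
def ee {n : ℕ} (i : Fin n) : V n := Pi.single i 1

/-- The reflection `s_v` in the vector `v`. -/
def sRefl {n : ℕ} (v x : V n) : V n := x - (2 * inn x v / inn v v) • v

/-- The roots `±e_i ± e_j` (`i ≠ j`), i.e. the root system of type `D_n`. -/
def DRoots (n : ℕ) : Set (V n) :=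
  {v | ∃ i j : Fin n, i ≠ j ∧ (v = ee i + ee j ∨ v = ee i - ee j ∨ v = -ee i - ee j)}

/-- The ambient root system `Φ` of type `B_n`, `C_n` or `D_n`. -/
def Phi (n : ℕ) : CType → Set (V n)
  | CType.B => DRoots n ∪ {v | ∃ i : Fin n, v = ee i ∨ v = -ee i}
  | CType.C => DRoots n ∪ {v | ∃ i : Fin n, v = (2:ℝ) • ee i ∨ v = -((2:ℝ) • ee i)}
  | CType.D => DRoots n

/-- The standard positive system `Φ⁺`: roots whose first nonzero coordinate is positive. -/
def PhiPos (n : ℕ) (ct : CType) : Set (V n) :=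
  {v | v ∈ Phi n ct ∧ ∃ i : Fin n, 0 < v i ∧ ∀ j : Fin n, j < i → v j = 0}

/-- The simple root `α_{i+1}` (`0`-based index `i`). -/
def alphaR (n : ℕ) (ct : CType) (i : Fin n) : V n :=
  if h : i.1 + 1 < n then ee i - ee ⟨i.1 + 1, h⟩
  else
    match ct with
    | CType.B => ee i
    | CType.C => (2:ℝ) • ee i
    | CType.D => ee ⟨n - 2, Nat.sub_lt i.pos (by norm_num)⟩ + ee i

/-- The subsystem `Φ_I` generated by the simple roots indexed by `I`. -/
def PhiI (n : ℕ) (ct : CType) (I : Finset (Fin n)) : Set (V n) :=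
  Phi n ct ∩ (Submodule.span ℝ (alphaR n ct '' (I : Set (Fin n))) : Set (V n))

/-- `λ` is `Φ_I`-regular. -/
def RegI (n : ℕ) (ct : CType) (I : Finset (Fin n)) (lam : V n) : Prop :=
  ∀ β ∈ PhiI n ct I, inn lam β ≠ 0

/-- `λ` is integral. -/
def IntegralW (n : ℕ) (ct : CType) (lam : V n) : Prop :=
  ∀ β ∈ Phi n ct, ∃ k : ℤ, 2 * inn lam β / inn β β = (k : ℝ)

/-- `λ` is dominant. -/
def DominantW (n : ℕ) (ct : CType) (lam : V n) : Prop :=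
  ∀ i : Fin n, 0 ≤ inn lam (alphaR n ct i)

/-- `μ` lies in the `W_I`-orbit of `λ` (`W_I` generated by the reflections `s_α`, `α ∈ I`). -/
def WIOrb (n : ℕ) (ct : CType) (I : Finset (Fin n)) : V n → V n → Prop :=
  Relation.ReflTransGen (fun x y => ∃ i ∈ I, y = sRefl (alphaR n ct i) x)

/-- `μ` lies in the `W`-orbit of `λ`. -/
def WOrb (n : ℕ) (ct : CType) : V n → V n → Prop := WIOrb n ct Finset.univ

/-- `λ ∈ Λ_I⁺`. -/
def LamIPlus (n : ℕ) (ct : CType) (I : Finset (Fin n)) (lam : V n) : Prop :=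
  IntegralW n ct lam ∧ ∀ i ∈ I, 0 < inn lam (alphaR n ct i)

/-- The sorted list `q_1 < q_2 < … < q_{m-1}` (`1`-based values) of indices of `Δ∖I`. -/
def Qlist (n : ℕ) (I : Finset (Fin n)) : List ℕ :=
  ((Finset.univ \ I).sort (· ≤ ·)).map (fun j => j.1 + 1)

/-- The number `m` of segments determined by `I`. -/
def mval (n : ℕ) (I : Finset (Fin n)) : ℕ := (Qlist n I).length + 1

/-- `q_s`, with the conventions `q_0 = 0` and `q_m = n`. -/
def qval (n : ℕ) (I : Finset (Fin n)) (s : ℕ) : ℕ :=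
  if s = 0 then 0 else if s < mval n I then (Qlist n I).getD (s - 1) 0 else n

/-- `I` is standard (automatic in types `B`, `C`). -/
def StandardI (n : ℕ) (ct : CType) (I : Finset (Fin n)) : Prop :=
  ct = CType.D → ∀ h : 2 ≤ n,
    ((⟨n - 2, by omega⟩ : Fin n) ∈ I ∨ (⟨n - 1, by omega⟩ : Fin n) ∉ I)

/-- `q_s`, corrected for nonstandard `I` (where `q_{m-1}` is replaced by `n`,
so that the `(m-1)`-st segment is `(q_{m-2}, n]` and the `m`-th segment is empty). -/
def qv (n : ℕ) (ct : CType) (I : Finset (Fin n)) (s : ℕ) : ℕ :=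
  if ¬ StandardI n ct I ∧ s = mval n I - 1 then n else qval n I s

/-- The segment length `n_s`. -/
def nsval (n : ℕ) (ct : CType) (I : Finset (Fin n)) (s : ℕ) : ℕ :=
  qv n ct I s - qv n ct I (s - 1)

/-- The (`0`-based) index `i` lies in the `s`-th segment, i.e. `q_{s-1} < i+1 ≤ q_s`. -/
def InSeg (n : ℕ) (ct : CType) (I : Finset (Fin n)) (s : ℕ) (i : Fin n) : Prop :=
  qv n ct I (s - 1) < i.1 + 1 ∧ i.1 + 1 ≤ qv n ct I s

/-- `n_s^λ(a)`: the number of entries of the `s`-th segment of `λ` with absolute value `a`. -/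
def nsl (n : ℕ) (ct : CType) (I : Finset (Fin n)) (lam : V n) (s : ℕ) (a : ℝ) : ℕ :=
  (Finset.univ.filter (fun i : Fin n => InSeg n ct I s i ∧ |lam i| = a)).card

/-- `a_t = λ̄_{q̄_t}` for `1 ≤ t < m̄`, and `a_{m̄} = 0`. -/
def aval (n : ℕ) (ct : CType) (J : Finset (Fin n)) (lbar : V n) (t : ℕ) : ℝ :=
  if t < mval n J then
    (if h : qv n ct J t - 1 < n then lbar ⟨qv n ct J t - 1, h⟩ else 0)
  else 0

/-- `n_s^λ(a)` is maximal among all `Φ_I`-regular weights in the orbit of `λ`. -/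
def IsMaxN (n : ℕ) (ct : CType) (I : Finset (Fin n)) (lam : V n) (s : ℕ) (a : ℝ) : Prop :=
  ∀ mu : V n, WOrb n ct lam mu → RegI n ct I mu →
    nsl n ct I mu s a ≤ nsl n ct I lam s a

/-- The exceptional configurations of Proposition 4.7 (types `B` and `C`, with
`shortR i` the short/long root `e_i` resp. `2e_i`). -/
def ExcBC (n : ℕ) (ct : CType) (I : Finset (Fin n)) (shortR : Fin n → V n)
    (lam β : V n) : Prop :=
  ∃ s : ℕ, 1 ≤ s ∧ s < mval n I ∧ ∃ a : ℝ, 0 < a ∧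
    nsl n ct I lam s a = 1 ∧
    nsl n ct I lam s 0 + nsl n ct I lam (mval n I) a = 1 ∧
    ((∃ i j : Fin n, InSeg n ct I s i ∧ InSeg n ct I s j ∧
        |lam i| = a ∧ lam j = 0 ∧ (β = shortR i ∨ β = ee i + ee j)) ∨
     (∃ i j : Fin n, InSeg n ct I s i ∧ InSeg n ct I (mval n I) j ∧
        ((lam i = a ∧ lam j = a) ∨ (lam i = -a ∧ lam j = -a)) ∧
        (β = shortR i ∨ β = ee i + ee j)) ∨
     (∃ i j : Fin n, InSeg n ct I s i ∧ InSeg n ct I (mval n I) j ∧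
        ((lam i = a ∧ lam j = -a) ∨ (lam i = -a ∧ lam j = a)) ∧
        (β = shortR i ∨ β = ee i - ee j)))

/-- The exceptional configurations of Proposition 4.7 (type `D`). -/
def ExcD (n : ℕ) (I : Finset (Fin n)) (lam β : V n) : Prop :=
  ∃ s : ℕ, 1 ≤ s ∧ s < mval n I ∧ ∃ a : ℝ, 0 < a ∧
    nsl n CType.D I lam s a = 1 ∧ nsl n CType.D I lam (mval n I) a = 1 ∧
    nsl n CType.D I lam s 0 = 1 ∧ nsl n CType.D I lam (mval n I) 0 = 1 ∧
    ∃ i j k l : Fin n, InSeg n CType.D I s i ∧ InSeg n CType.D I s j ∧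
      InSeg n CType.D I (mval n I) k ∧ InSeg n CType.D I (mval n I) l ∧
      lam j = 0 ∧ lam l = 0 ∧
      ((((lam i = a ∧ lam k = a) ∨ (lam i = -a ∧ lam k = -a)) ∧
          (β = ee i + ee j ∨ β = ee i + ee k)) ∨
       (((lam i = a ∧ lam k = -a) ∨ (lam i = -a ∧ lam k = a)) ∧
          (β = ee i + ee j ∨ β = ee i - ee k)))

/-- The exceptional configurations in which `β` fails to be a linked root. -/
def Exc (n : ℕ) (ct : CType) (I : Finset (Fin n)) (lam β : V n) : Prop :=
  match ct with
  | CType.B => ExcBC n CType.B I (fun i => ee i) lam β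
  | CType.C => ExcBC n CType.C I (fun i => (2:ℝ) • ee i) lam β
  | CType.D => ExcD n I lam β

/-- `β` is a linked root of the `Φ_I`-regular weight `λ` (for standard `I`). -/
def PlainLinked (n : ℕ) (ct : CType) (I : Finset (Fin n)) (lam β : V n) : Prop :=
  RegI n ct I lam ∧ β ∈ PhiPos n ct ∧ β ∉ PhiI n ct I ∧
  RegI n ct I (sRefl β lam) ∧ sRefl β lam ≠ lam ∧ ¬ Exc n ct I lam β

/-- The transposition of the last two indices. -/
def swapLast (n : ℕ) (j : Fin n) : Fin n :=
  if j.1 = n - 1 then ⟨n - 2, Nat.sub_lt j.pos (by norm_num)⟩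
  else if j.1 = n - 2 then ⟨n - 1, Nat.sub_lt j.pos (by norm_num)⟩
  else j

/-- The isomorphism `φ = s_{e_n}` (negating the last coordinate). -/
def phiW {n : ℕ} (x : V n) : V n := fun j => if j.1 = n - 1 then -x j else x j

/-- The image `φ(I)` of an index set under `φ` (interchanging `α_{n-1}` and `α_n`). -/
def phiIdx (n : ℕ) (I : Finset (Fin n)) : Finset (Fin n) := I.image (swapLast n)

/-- `β` is a linked root of `λ`; for nonstandard `I` the notion is transported along `φ`. -/
def LinkedRoot (n : ℕ) (ct : CType) (I : Finset (Fin n)) (lam β : V n) : Prop :=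
  if StandardI n ct I then PlainLinked n ct I lam β
  else PlainLinked n ct (phiIdx n I) (phiW lam) (phiW β)

/-- One step in a connecting chain: `y ∈ W_I x`, or `y = w s_β x` for a linked root `β` of `x`. -/
def ConnStep (n : ℕ) (ct : CType) (I : Finset (Fin n)) (x y : V n) : Prop :=
  RegI n ct I x ∧ RegI n ct I y ∧
  (WIOrb n ct I x y ∨ ∃ β : V n, LinkedRoot n ct I x β ∧ WIOrb n ct I (sRefl β x) y)

/-- `λ ⟷ μ`: `λ` and `μ` are connected by a chain of linked roots. -/
def Conn (n : ℕ) (ct : CType) (I : Finset (Fin n)) (lam mu : V n) : Prop :=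
  RegI n ct I lam ∧ RegI n ct I mu ∧
  Relation.ReflTransGen (ConnStep n ct I) lam mu

/-- The set `^IW^Jλ̄ = Wλ̄ ∩ Λ_I⁺` of weights parametrizing the simple modules. -/
def IWJset (n : ℕ) (ct : CType) (I : Finset (Fin n)) (lbar : V n) : Set (V n) :=
  {mu | WOrb n ct lbar mu ∧ LamIPlus n ct I mu}

/-- `(S, S̄)` is a separable pair for the weight `λ`. -/
def IsSepPair (n : ℕ) (ct : CType) (I J : Finset (Fin n)) (lbar lam : V n)
    (S Sb : Finset ℕ) : Prop :=
  S.Nonempty ∧ Sb.Nonempty ∧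
  S ⊆ Finset.Icc 1 (mval n I) ∧ Sb ⊆ Finset.Icc 1 (mval n J) ∧
  1 < mval n I ∧ 1 < mval n J ∧
  (∀ s ∈ S, ∀ t ∈ Sb, IsMaxN n ct I lam s (aval n ct J lbar t)) ∧
  (∀ s ∈ Finset.Icc 1 (mval n I), s ∉ S →
     ∀ t ∈ Finset.Icc 1 (mval n J), t ∉ Sb →
       nsl n ct I lam s (aval n ct J lbar t) = 0) ∧
  (match ct with
   | CType.B => (mval n I ∈ S ↔ mval n J ∉ Sb)
   | CType.C => (mval n I ∈ S ↔ mval n J ∉ Sb)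
   | CType.D => (mval n I ∈ S ↔ mval n J ∈ Sb))

/-- `𝒟`: the set of separable pairs of the system `(Φ, Φ_I, Φ_J)`. -/
def DSet (n : ℕ) (ct : CType) (I J : Finset (Fin n)) (lbar : V n) :
    Set (Finset ℕ × Finset ℕ) :=
  {p | ∀ lam ∈ IWJset n ct I lbar, IsSepPair n ct I J lbar lam p.1 p.2}

/-- The four weakly separable pairs. -/
def IsWeakPair (n : ℕ) (I J : Finset (Fin n)) (p : Finset ℕ × Finset ℕ) : Prop :=
  p = (Finset.Icc 1 (mval n I - 1), {mval n J}) ∨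
  p = (Finset.Icc 1 (mval n I), {mval n J}) ∨
  p = ({mval n I}, Finset.Icc 1 (mval n J - 1)) ∨
  p = ({mval n I}, Finset.Icc 1 (mval n J))

/-- The system `(Φ, Φ_I, Φ_J)` is separable. -/
def SepSys (n : ℕ) (ct : CType) (I J : Finset (Fin n)) (lbar : V n) : Prop :=
  (DSet n ct I J lbar).Nonempty

/-- The system `(Φ, Φ_I, Φ_J)` is strongly separable. -/
def StronglySepSys (n : ℕ) (ct : CType) (I J : Finset (Fin n)) (lbar : V n) : Prop :=
  ∃ p ∈ DSet n ct I J lbar, ¬ IsWeakPair n I J p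

/-- The system `(Φ, Φ_I, Φ_J)` is weakly separable. -/
def WeaklySepSys (n : ℕ) (ct : CType) (I J : Finset (Fin n)) (lbar : V n) : Prop :=
  SepSys n ct I J lbar ∧ ∀ p ∈ DSet n ct I J lbar, IsWeakPair n I J p

/-- The partial ordering on separable pairs: `(S₁,S̄₁) ≤ (S₂,S̄₂)` iff `S₁ ⊆ S₂`, `S̄₁ ⊇ S̄₂`. -/
def pairLE (p q : Finset ℕ × Finset ℕ) : Prop := p.1 ⊆ q.1 ∧ q.2 ⊆ p.2

/-- Strict version of `pairLE`. -/
def pairLT (p q : Finset ℕ × Finset ℕ) : Prop := pairLE p q ∧ p ≠ q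

/-- The generating relations of the equivalence `∼` on `𝒟`. -/
def PairRel (D : Set (Finset ℕ × Finset ℕ)) (p q : Finset ℕ × Finset ℕ) : Prop :=
  p ∈ D ∧ q ∈ D ∧ ((p.2 = q.2 ∧ p.1 ⊆ q.1) ∨ (p.1 = q.1 ∧ p.2 ⊆ q.2))

/-- The equivalence relation `∼` on separable pairs. -/
def PairEquiv (D : Set (Finset ℕ × Finset ℕ)) :
    Finset ℕ × Finset ℕ → Finset ℕ × Finset ℕ → Prop :=
  Relation.EqvGen (PairRel D)

/-- A trivial separable pair. -/
def TrivialPair (n : ℕ) (ct : CType) (I J : Finset (Fin n)) (lbar : V n)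
    (p : Finset ℕ × Finset ℕ) : Prop :=
  match ct with
  | CType.B | CType.C =>
    (∃ s0 : ℕ, 1 ≤ s0 ∧ s0 < mval n I ∧
       PairEquiv (DSet n ct I J lbar) p ({s0}, Finset.Icc 1 (mval n J))) ∨
    (∃ t0 : ℕ, 1 ≤ t0 ∧ t0 < mval n J ∧
       PairEquiv (DSet n ct I J lbar) p (Finset.Icc 1 (mval n I), {t0}))
  | CType.D =>
    (∃ s0 : ℕ, 1 ≤ s0 ∧ s0 < mval n I ∧
       PairEquiv (DSet n ct I J lbar) p ({s0}, Finset.Icc 1 (mval n J - 1))) ∨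
    (∃ t0 : ℕ, 1 ≤ t0 ∧ t0 < mval n J ∧
       PairEquiv (DSet n ct I J lbar) p (Finset.Icc 1 (mval n I - 1), {t0}))

/-- The set of blocks: equivalence classes of `^IW^Jλ̄` under `⟷`. -/
def BlockSet (n : ℕ) (ct : CType) (I : Finset (Fin n)) (lbar : V n) : Set (Set (V n)) :=
  {Cl | ∃ lam ∈ IWJset n ct I lbar,
     Cl = {mu | mu ∈ IWJset n ct I lbar ∧ Conn n ct I lam mu}}

/-- The parity `P(λ)` of the number of negative entries of `λ`. -/
def Pfun (n : ℕ) (lam : V n) : ℕ :=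
  (Finset.univ.filter (fun i : Fin n => lam i < 0)).card % 2

/-- A fundamental chain `c 1 ∼ c 2 ∼ … ∼ c k` in `𝒟`. -/
def IsFundChain (D : Set (Finset ℕ × Finset ℕ)) (c : ℕ → Finset ℕ × Finset ℕ)
    (k : ℕ) : Prop :=
  1 ≤ k ∧ (∀ i, 1 ≤ i → i ≤ k → c i ∈ D) ∧
  (∀ i, 1 ≤ i → i < k →
     ((c i).1 = (c (i+1)).1 ∨ (c i).2 = (c (i+1)).2) ∧
     (pairLT (c i) (c (i+1)) ∨ pairLT (c (i+1)) (c i)))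

/-- The list of parts of the partition `π_I`. -/
def piParts (n : ℕ) (ct : CType) (I : Finset (Fin n)) : List ℕ :=
  (List.range (mval n I - 1)).map (fun s => nsval n ct I (s+1)) ++
  (List.range (mval n I - 1)).map (fun s => nsval n ct I (s+1)) ++
  (match ct with
   | CType.B => [2 * nsval n ct I (mval n I) + 1]
   | CType.C => [2 * nsval n ct I (mval n I)]
   | CType.D => if nsval n ct I (mval n I) = 0 then []
                else [2 * nsval n ct I (mval n I) - 1, 1])

/-- The `i`-th part (`1`-based) of the partition with list of parts `L`. -/
def partAt (L : List ℕ) (i : ℕ) : ℕ :=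
  (L.mergeSort (fun a b => decide (b ≤ a))).getD (i - 1) 0

/-- The `i`-th part (`1`-based) of the dual partition `π^t`: the number of parts `≥ i`. -/
def dualAt (L : List ℕ) (i : ℕ) : ℕ :=
  (L.filter (fun x => decide (i ≤ x))).length

/-- `k` is compatible with the system `(Φ, Φ_I, Φ_J)`. -/
def CompatibleK (n : ℕ) (ct : CType) (I J : Finset (Fin n)) (k : ℕ) : Prop :=
  1 ≤ k ∧ k ≤ 2 * mval n I - 1 ∧
  (match ct with
   | CType.B =>
     (Odd k ∧ k ≤ partAt (piParts n CType.B J) 2 ∧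
        2 * nsval n CType.B J (mval n J) + 1 ≤ k ∧
        partAt (piParts n CType.B I) k ≤ 2 * nsval n CType.B I (mval n I) + 1) ∨
     (Even k ∧ k ≤ 2 * nsval n CType.B J (mval n J) ∧
        2 * nsval n CType.B I (mval n I) + 1 ≤ partAt (piParts n CType.B I) k)
   | CType.C =>
     (Odd k ∧ k ≤ partAt (piParts n CType.C J) 2 ∧
        2 * nsval n CType.C J (mval n J) + 1 ≤ k ∧
        partAt (piParts n CType.C I) k ≤ 2 * nsval n CType.C I (mval n I)) ∨
     (Even k ∧ k ≤ 2 * nsval n CType.C J (mval n J) ∧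
        2 * nsval n CType.C I (mval n I) + 1 ≤ partAt (piParts n CType.C I) k)
   | CType.D =>
     (Even k ∧ k ≤ partAt (piParts n CType.D J) 2 ∧
        2 * nsval n CType.D J (mval n J) ≤ k ∧
        2 * nsval n CType.D I (mval n I) ≤ partAt (piParts n CType.D I) k) ∨
     (Odd k ∧ k ≤ 2 * nsval n CType.D J (mval n J) - 1 ∧
        partAt (piParts n CType.D I) k ≤ 2 * nsval n CType.D I (mval n I) - 1))

/-- `s_{e_{k_1}}^{ε_1} ⋯ s_{e_{k_r}}^{ε_r} μ`. -/
def applyFlips (n : ℕ) (ks : ℕ → Fin n) (eps : ℕ → Bool) : ℕ → V n → V n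
  | 0, v => v
  | (r+1), v =>
      if eps (r+1) then sRefl (ee (ks (r+1))) (applyFlips n ks eps r v)
      else applyFlips n ks eps r v

end

/-- Segment index. -/
noncomputable def sg {n : ℕ} (I : Finset (Fin n)) (p : Fin n) : ℕ :=
  (Finset.univ.filter (fun r : Fin n => r ∉ I ∧ r < p)).card

/-- Last segment index. -/
noncomputable def mm {n : ℕ} (I : Finset (Fin n)) : ℕ :=
  (Finset.univ.filter (fun r : Fin n => r ∉ I)).card

theorem sg_eq_iff {n : ℕ} (I : Finset (Fin n)) {p q : Fin n} (h : p < q) :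
    sg I p = sg I q ↔ ∀ r, p ≤ r → r < q → r ∈ I := by
  have hsub : (Finset.univ.filter (fun r : Fin n => r ∉ I ∧ r < p)) ⊆
      (Finset.univ.filter (fun r : Fin n => r ∉ I ∧ r < q)) := by
    intro r hr
    simp only [Finset.mem_filter, Finset.mem_univ, true_and] at hr ⊢
    exact ⟨hr.1, hr.2.trans h⟩
  constructor
  · intro he r h1 h2
    by_contra hI
    have := Finset.eq_of_subset_of_card_le hsub he.ge
    have h3 : r ∈ (Finset.univ.filter (fun r : Fin n => r ∉ I ∧ r < q)) := by simp [hI, h2]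
    rw [← this] at h3
    simp only [Finset.mem_filter, Finset.mem_univ, true_and] at h3
    exact absurd h3.2 (not_lt.2 h1)
  · intro he
    unfold sg
    congr 1
    apply Finset.Subset.antisymm hsub
    intro r hr
    simp only [Finset.mem_filter, Finset.mem_univ, true_and] at hr ⊢
    refine ⟨hr.1, ?_⟩
    by_contra h3
    exact hr.1 (he r (not_lt.1 h3) hr.2)

theorem sg_last {n : ℕ} (I : Finset (Fin n)) {p : Fin n} :
    sg I p = mm I ↔ ∀ r, p ≤ r → r ∈ I := by
  have hsub : (Finset.univ.filter (fun r : Fin n => r ∉ I ∧ r < p)) ⊆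
      (Finset.univ.filter (fun r : Fin n => r ∉ I)) := by
    intro r hr
    simp only [Finset.mem_filter, Finset.mem_univ, true_and] at hr ⊢
    exact hr.1
  constructor
  · intro he r h1
    by_contra hI
    have := Finset.eq_of_subset_of_card_le hsub he.ge
    have h3 : r ∈ (Finset.univ.filter (fun r : Fin n => r ∉ I)) := by simp [hI]
    rw [← this] at h3
    simp only [Finset.mem_filter, Finset.mem_univ, true_and] at h3
    exact absurd h3.2 (not_lt.2 h1)
  · intro he
    unfold sg mm
    congr 1
    apply Finset.Subset.antisymm hsub
    intro r hr
    simp only [Finset.mem_filter, Finset.mem_univ, true_and] at hr ⊢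
    refine ⟨hr, ?_⟩
    by_contra h3
    exact hr (he r (not_lt.1 h3))

theorem list_aux (N : ℕ) : ∀ (l : List ℕ), l.Pairwise (· < ·) → ∀ k, k ≤ l.length →
    (((0 < k → l.getD (k-1) 0 < N) ∧ (k < l.length → N ≤ l.getD k 0)) ↔
      l.countP (fun x => decide (x < N)) = k) := by
  intro l
  induction l with
  | nil => intro _ k hk; simp at hk; subst hk; simp
  | cons x l ih =>
    intro hp k hk
    rw [List.pairwise_cons] at hp
    by_cases hx : x < N
    · rw [List.countP_cons_of_pos (by simpa using hx)]
      cases k with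
      | zero => simp; omega
      | succ k =>
        have := ih hp.2 k (by simpa using hk)
        rw [Nat.add_right_cancel_iff, ← this]
        cases k with
        | zero => simp [hx]
        | succ k => simp
    · rw [List.countP_cons_of_neg (by simpa using hx)]
      have h0 : l.countP (fun x => decide (x < N)) = 0 := by
        rw [List.countP_eq_zero]
        intro y hy
        have := hp.1 y hy
        simp; omega
      rw [h0]
      cases k with
      | zero => simp; omega
      | succ k =>
        simp only [Nat.zero_ne_add_one, iff_false, not_and]
        intro h1
        exfalso
        have h1 := h1 (by omega)
        cases k with
        | zero => simp at h1; omega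
        | succ k =>
          simp at hk
          have hk' : k < l.length := by omega
          simp [List.getElem?_eq_getElem hk'] at h1
          have := hp.1 _ (List.getElem_mem hk')
          omega

theorem mval_eq {n : ℕ} (I : Finset (Fin n)) : mval n I = mm I + 1 := by
  unfold mval Qlist mm
  simp only [List.length_map, Finset.length_sort]
  congr 2
  ext r; simp

theorem Qlist_sorted {n : ℕ} (I : Finset (Fin n)) : (Qlist n I).Pairwise (· < ·) := by
  unfold Qlist
  rw [List.pairwise_map]
  have := Finset.sortedLT_sort (Finset.univ \ I)
  refine this.pairwise.imp ?_
  intro a b hab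
  have : a.1 < b.1 := hab
  omega

theorem Qlist_count {n : ℕ} (I : Finset (Fin n)) (p : Fin n) :
    (Qlist n I).countP (fun x => decide (x < p.1 + 1)) = sg I p := by
  unfold Qlist sg
  have hf : ((fun x => decide (x < p.1 + 1)) ∘ fun j : Fin n => j.1 + 1) =
      fun j : Fin n => decide (j.1 + 1 < p.1 + 1) := rfl
  rw [List.countP_map, hf, ← Multiset.coe_countP, Finset.sort_eq, Multiset.countP_eq_card_filter]
  rw [← Finset.filter_val, Finset.card_val]
  congr 1
  ext r
  simp

theorem inSeg_iff {n : ℕ} {ct : CType} {I : Finset (Fin n)} (hstd : StandardI n ct I)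
    {s : ℕ} (h1 : 1 ≤ s) (hs : s ≤ mval n I) (p : Fin n) :
    InSeg n ct I s p ↔ s = sg I p + 1 := by
  obtain ⟨k, rfl⟩ : ∃ k, s = k + 1 := ⟨s - 1, by omega⟩
  have hk : k ≤ (Qlist n I).length := by unfold mval at hs; omega
  have := list_aux (p.1+1) (Qlist n I) (Qlist_sorted I) k hk
  rw [Qlist_count] at this
  rw [Nat.add_right_cancel_iff, eq_comm, ← this]
  unfold InSeg qv qval
  simp only [hstd, not_true, false_and, if_false, Nat.add_sub_cancel]
  have hp := p.2
  apply and_congr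
  · by_cases hk0 : k = 0
    · simp [hk0]
    · have : k < mval n I := by omega
      simp [hk0, this, Nat.pos_of_ne_zero hk0]
  · have : (k + 1 < mval n I) ↔ k < (Qlist n I).length := by unfold mval; omega
    simp only [this, Nat.add_eq_zero_iff, one_ne_zero, and_false, if_false]
    split_ifs with h
    · simp [h]
    · simp [h]

theorem nsl_eq {n : ℕ} {ct : CType} {I : Finset (Fin n)} (hstd : StandardI n ct I)
    {s : ℕ} (h1 : 1 ≤ s) (hs : s ≤ mval n I) (lam : V n) (a : ℝ) :
    nsl n ct I lam s a =
      (Finset.univ.filter (fun p : Fin n => s = sg I p + 1 ∧ |lam p| = a)).card := by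
  unfold nsl
  congr 1
  ext p
  simp [inSeg_iff hstd h1 hs]

/-- Signed transposition. -/
noncomputable def R {n : ℕ} (c : ℝ) (p q : Fin n) (x : V n) : V n :=
  fun r => if r = p then c * x q else if r = q then c * x p else x r

theorem inn_ee {n : ℕ} (x : V n) (p : Fin n) : inn x (ee p) = x p := by
  simp [inn, ee, Pi.single_apply]

theorem inn_sub {n : ℕ} (x y z : V n) : inn x (y - z) = inn x y - inn x z := by
  simp [inn, mul_sub]

theorem inn_add {n : ℕ} (x y z : V n) : inn x (y + z) = inn x y + inn x z := by
  simp [inn, mul_add, Finset.sum_add_distrib]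

theorem inn_smul {n : ℕ} (x y : V n) (c : ℝ) : inn x (c • y) = c * inn x y := by
  simp only [inn, Pi.smul_apply, smul_eq_mul, Finset.mul_sum]
  exact Finset.sum_congr rfl (fun _ _ => by ring)

theorem ee_apply {n : ℕ} (p r : Fin n) : (ee p : V n) r = if r = p then 1 else 0 := by
  simp [ee, Pi.single_apply]

theorem sRefl_R {n : ℕ} {c : ℝ} (hc : c * c = 1) {p q : Fin n} (h : p ≠ q) (x : V n) :
    sRefl (ee p - c • ee q) x = R c p q x := by
  have h1 : inn x (ee p - c • ee q) = x p - c * x q := by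
    rw [inn_sub, inn_smul, inn_ee, inn_ee]
  have h2 : inn (ee p - c • ee q) (ee p - c • ee q) = 2 := by
    rw [inn_sub, inn_smul, inn_ee, inn_ee]
    simp [ee_apply, h, h.symm]
    linarith
  funext r
  simp only [sRefl, h1, h2, R, Pi.sub_apply, Pi.smul_apply, ee_apply, smul_eq_mul]
  by_cases hp : r = p
  · subst hp; simp [h]
  · by_cases hq : r = q
    · subst hq; simp [hp]; linear_combination (-x r) * hc
    · simp [hp, hq]

theorem sRefl_ee {n : ℕ} (k : ℝ) (hk : k ≠ 0) (p : Fin n) (x : V n) :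
    sRefl (k • ee p) x = Function.update x p (-x p) := by
  have h1 : inn x (k • ee p) = k * x p := by rw [inn_smul, inn_ee]
  have h2 : inn (k • ee p) (k • ee p) = k * k := by
    rw [inn_smul, inn_ee]; simp [ee_apply]
  funext r
  simp only [sRefl, h1, h2, Pi.sub_apply, Pi.smul_apply, ee_apply, smul_eq_mul, Function.update_apply]
  by_cases hp : r = p
  · subst hp; simp; field_simp; ring
  · simp [hp]

/-- Partial-sum functional. -/
noncomputable def FF {n : ℕ} (r : Fin n) : V n →ₗ[ℝ] ℝ :=
  ∑ i ∈ Finset.Iic r, LinearMap.proj i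

theorem FF_ee {n : ℕ} (r p : Fin n) : FF r (ee p) = if p ≤ r then (1:ℝ) else 0 := by
  simp [FF, ee, Pi.single_apply]

theorem FF_span {n : ℕ} {ct : CType} {I : Finset (Fin n)} (hstd : StandardI n ct I)
    {r : Fin n} (hr : r ∉ I) {v : V n}
    (hv : v ∈ Submodule.span ℝ (alphaR n ct '' (I : Set (Fin n)))) : FF r v = 0 := by
  have : Submodule.span ℝ (alphaR n ct '' (I : Set (Fin n))) ≤ LinearMap.ker (FF r) := by
    rw [Submodule.span_le]
    rintro _ ⟨i, hi, rfl⟩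
    have hi : i ∈ I := hi
    have hne : i.1 ≠ r.1 := fun h => hr (by rwa [← Fin.ext h])
    simp only [SetLike.mem_coe, LinearMap.mem_ker]
    unfold alphaR
    have hr2 := r.2
    have hi2 := i.2
    split_ifs with h
    · simp only [map_sub, FF_ee, Fin.le_def]
      by_cases h1 : i.1 ≤ r.1
      · have : i.1 + 1 ≤ r.1 := by omega
        simp [h1, this]
      · have : ¬ i.1 + 1 ≤ r.1 := by omega
        simp [h1, this]
    · have h1 : ¬ i.1 ≤ r.1 := by omega
      cases ct with
      | B => simp [FF_ee, Fin.le_def, h1]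
      | C => simp [FF_ee, Fin.le_def, h1]
      | D =>
        simp only [map_add, FF_ee, Fin.le_def, h1]
        have h2 : ¬ (n - 2 ≤ r.1) := by
          intro h2
          have hn : 2 ≤ n := by omega
          rcases hstd rfl hn with h3 | h3
          · apply hr
            convert h3 using 1
            ext; simp; omega
          · apply h3
            convert hi using 1
            ext; simp; omega
        simp [h2]
  exact this hv

/-- Combinatorial regularity. -/
def RegP {n : ℕ} (ct : CType) (I : Finset (Fin n)) (x : V n) : Prop :=
  (∀ p q, p ≠ q → sg I p = sg I q → x p ≠ x q) ∧
  (∀ p q, p ≠ q → sg I p = mm I → sg I q = mm I → x p ≠ - x q) ∧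
  (ct ≠ CType.D → ∀ p, sg I p = mm I → x p ≠ 0)

theorem span_sub {n : ℕ} {ct : CType} {I : Finset (Fin n)} (d : ℕ) : ∀ (p q : Fin n),
    q.1 = p.1 + d → (∀ r, p ≤ r → r < q → r ∈ I) →
    (ee p - ee q : V n) ∈ Submodule.span ℝ (alphaR n ct '' (I : Set (Fin n))) := by
  induction d with
  | zero =>
    intro p q h _
    have : q = p := Fin.ext h
    simp [this]
  | succ d ih =>
    intro p q h hI
    have hq := q.2
    let p' : Fin n := ⟨p.1 + d, by omega⟩
    have hp' : p'.1 = p.1 + d := rfl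
    have h1 := ih p p' rfl (fun r h1 h2 => hI r h1 (by rw [Fin.lt_def] at *; omega))
    have h2 : p' ∈ I := hI p' (by rw [Fin.le_def]; omega) (by rw [Fin.lt_def]; omega)
    have h3 : alphaR n ct p' = ee p' - ee q := by
      unfold alphaR
      have : p'.1 + 1 < n := by omega
      rw [dif_pos this]
      congr 2
      ext; simp; omega
    have h4 : (ee p' - ee q : V n) ∈ Submodule.span ℝ (alphaR n ct '' (I : Set (Fin n))) := by
      rw [← h3]
      exact Submodule.subset_span ⟨p', h2, rfl⟩
    have := Submodule.add_mem _ h1 h4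
    simpa using this

theorem span_sub' {n : ℕ} {ct : CType} {I : Finset (Fin n)} {p q : Fin n} (h : p ≤ q)
    (hI : ∀ r, p ≤ r → r < q → r ∈ I) :
    (ee p - ee q : V n) ∈ Submodule.span ℝ (alphaR n ct '' (I : Set (Fin n))) :=
  span_sub (q.1 - p.1) p q (by rw [Fin.le_def] at h; omega) hI

theorem span_short {n : ℕ} {ct : CType} (hct : ct ≠ CType.D) {I : Finset (Fin n)} {p : Fin n}
    (hI : ∀ r, p ≤ r → r ∈ I) :
    (ee p : V n) ∈ Submodule.span ℝ (alphaR n ct '' (I : Set (Fin n))) := by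
  have hp := p.2
  let q : Fin n := ⟨n - 1, by omega⟩
  have hpq : p ≤ q := by rw [Fin.le_def]; show p.1 ≤ n - 1; omega
  have h1 := span_sub' (ct := ct) hpq (fun r h _ => hI r h)
  have h2 : alphaR n ct q ∈ Submodule.span ℝ (alphaR n ct '' (I : Set (Fin n))) :=
    Submodule.subset_span ⟨q, hI q hpq, rfl⟩
  have h3 : ¬ (q.1 + 1 < n) := by show ¬ (n - 1 + 1 < n); omega
  have h4 : (ee q : V n) ∈ Submodule.span ℝ (alphaR n ct '' (I : Set (Fin n))) := by
    unfold alphaR at h2 ⊢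
    rw [dif_neg h3] at h2
    cases ct with
    | B => exact h2
    | C =>
      have := Submodule.smul_mem _ (2⁻¹ : ℝ) h2
      simpa [smul_smul] using this
    | D => exact absurd rfl hct
  have := Submodule.add_mem _ h1 h4
  simpa using this

theorem span_add {n : ℕ} {ct : CType} {I : Finset (Fin n)} {p q : Fin n} (hpq : p < q)
    (hI : ∀ r, p ≤ r → r ∈ I) :
    (ee p + ee q : V n) ∈ Submodule.span ℝ (alphaR n ct '' (I : Set (Fin n))) := by
  by_cases hct : ct = CType.D
  · have hp := p.2
    have hq := q.2
    rw [Fin.lt_def] at hpq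
    let u : Fin n := ⟨n - 1, by omega⟩
    let w : Fin n := ⟨n - 2, by omega⟩
    have h1 : (ee p - ee w : V n) ∈ Submodule.span ℝ (alphaR n ct '' (I : Set (Fin n))) :=
      span_sub' (by rw [Fin.le_def]; show p.1 ≤ n - 2; omega) (fun r h _ => hI r h)
    have h2 : (ee q - ee u : V n) ∈ Submodule.span ℝ (alphaR n ct '' (I : Set (Fin n))) :=
      span_sub' (by rw [Fin.le_def]; show q.1 ≤ n - 1; omega)
        (fun r h _ => hI r (by rw [Fin.le_def] at *; omega))
    have h3 : alphaR n ct u ∈ Submodule.span ℝ (alphaR n ct '' (I : Set (Fin n))) :=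
      Submodule.subset_span ⟨u, hI u (by rw [Fin.le_def]; show p.1 ≤ n - 1; omega), rfl⟩
    have h4 : alphaR n ct u = ee w + ee u := by
      unfold alphaR
      have : ¬ (u.1 + 1 < n) := by show ¬ (n - 1 + 1 < n); omega
      rw [dif_neg this]
      subst hct
      rfl
    rw [h4] at h3
    have := Submodule.add_mem _ (Submodule.add_mem _ h1 h2) h3
    convert this using 1
    abel
  · exact Submodule.add_mem _ (span_short hct hI)
      (span_short hct (fun r h => hI r (hpq.le.trans h)))

theorem DRoots_sub {n : ℕ} (ct : CType) : DRoots n ⊆ Phi n ct := by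
  intro v hv
  cases ct with
  | B => exact Or.inl hv
  | C => exact Or.inl hv
  | D => exact hv

theorem RegP_of_RegI {n : ℕ} {ct : CType} {I : Finset (Fin n)} {x : V n}
    (h : RegI n ct I x) : RegP ct I x := by
  have hA : ∀ p q, p < q → sg I p = sg I q → x p ≠ x q := by
    intro p q hpq hs he
    refine h (ee p - ee q) ⟨DRoots_sub ct ⟨p, q, hpq.ne, Or.inr (Or.inl rfl)⟩, ?_⟩ ?_
    · exact span_sub' hpq.le ((sg_eq_iff I hpq).1 hs)
    · rw [inn_sub, inn_ee, inn_ee, he, sub_self]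
  have hB : ∀ p q, p < q → sg I p = mm I → x p ≠ - x q := by
    intro p q hpq hs he
    refine h (ee p + ee q) ⟨DRoots_sub ct ⟨p, q, hpq.ne, Or.inl rfl⟩, ?_⟩ ?_
    · exact span_add hpq ((sg_last I).1 hs)
    · rw [inn_add, inn_ee, inn_ee, he, neg_add_cancel]
  refine ⟨?_, ?_, ?_⟩
  · intro p q hpq hs he
    rcases lt_or_gt_of_ne hpq with h1 | h1
    · exact hA p q h1 hs he
    · exact hA q p h1 hs.symm he.symm
  · intro p q hpq hs hs' he
    rcases lt_or_gt_of_ne hpq with h1 | h1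
    · exact hB p q h1 hs he
    · exact hB q p h1 hs' (by rw [he, neg_neg])
  · intro hct p hs he
    have hsp := span_short hct ((sg_last I).1 hs)
    cases ct with
    | B =>
      refine h (ee p) ⟨Or.inr ⟨p, Or.inl rfl⟩, hsp⟩ ?_
      rw [inn_ee, he]
    | C =>
      refine h ((2:ℝ) • ee p) ⟨Or.inr ⟨p, Or.inl rfl⟩, Submodule.smul_mem _ _ hsp⟩ ?_
      rw [inn_smul, inn_ee, he, mul_zero]
    | D => exact hct rfl

theorem span_sg_sub {n : ℕ} {ct : CType} {I : Finset (Fin n)} (hstd : StandardI n ct I)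
    {p q : Fin n}
    (h : (ee p - ee q : V n) ∈ Submodule.span ℝ (alphaR n ct '' (I : Set (Fin n)))) :
    sg I p = sg I q := by
  wlog hpq : p ≤ q generalizing p q
  · refine (this ?_ (le_of_not_ge hpq)).symm
    have := Submodule.neg_mem _ h
    rwa [neg_sub] at this
  rcases hpq.eq_or_lt with rfl | hpq
  · rfl
  rw [sg_eq_iff I hpq]
  intro r h1 h2
  by_contra hr
  have := FF_span hstd hr h
  simp [FF_ee, h1, not_le.2 h2] at this

theorem span_sg_add {n : ℕ} {ct : CType} {I : Finset (Fin n)} (hstd : StandardI n ct I)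
    {p q : Fin n}
    (h : (ee p + ee q : V n) ∈ Submodule.span ℝ (alphaR n ct '' (I : Set (Fin n)))) :
    sg I p = mm I := by
  rw [sg_last I]
  intro r h1
  by_contra hr
  have := FF_span hstd hr h
  simp only [map_add, FF_ee, h1, if_true] at this
  split_ifs at this <;> norm_num at this

theorem span_sg_short {n : ℕ} {ct : CType} {I : Finset (Fin n)} (hstd : StandardI n ct I)
    {p : Fin n}
    (h : (ee p : V n) ∈ Submodule.span ℝ (alphaR n ct '' (I : Set (Fin n)))) :
    sg I p = mm I := by
  rw [sg_last I]
  intro r h1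
  by_contra hr
  have := FF_span hstd hr h
  simp [FF_ee, h1] at this

theorem RegI_of_RegP {n : ℕ} {ct : CType} {I : Finset (Fin n)} (hstd : StandardI n ct I) {x : V n}
    (h : RegP ct I x) : RegI n ct I x := by
  obtain ⟨h1, h2, h3⟩ := h
  have hadd : ∀ i j : Fin n, i ≠ j →
      (ee i + ee j : V n) ∈ Submodule.span ℝ (alphaR n ct '' (I : Set (Fin n))) →
      x i + x j ≠ 0 := by
    intro i j hij hsp he
    refine h2 i j hij (span_sg_add hstd hsp) (span_sg_add (q := i) hstd ?_) (by linarith)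
    rwa [add_comm] 
  have hD : ∀ β ∈ DRoots n, β ∈ Submodule.span ℝ (alphaR n ct '' (I : Set (Fin n))) →
      inn x β ≠ 0 := by
    rintro β ⟨i, j, hij, rfl | rfl | rfl⟩ hsp
    · rw [inn_add, inn_ee, inn_ee]; exact hadd i j hij hsp
    · rw [inn_sub, inn_ee, inn_ee, sub_ne_zero]
      exact h1 i j hij (span_sg_sub hstd hsp)
    · have := Submodule.neg_mem _ hsp
      have e : -(-ee i - ee j : V n) = ee i + ee j := by abel
      rw [e] at this
      have h5 := hadd i j hij this
      have e2 : (-ee i - ee j : V n) = (-1:ℝ) • (ee i + ee j) := by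
        rw [neg_one_smul]; abel
      rw [e2, inn_smul, inn_add, inn_ee, inn_ee]
      intro h6; apply h5; linarith
  have hS : ∀ (k : ℝ) (i : Fin n), k ≠ 0 → ct ≠ CType.D →
      k • (ee i : V n) ∈ Submodule.span ℝ (alphaR n ct '' (I : Set (Fin n))) →
      inn x (k • ee i) ≠ 0 := by
    intro k i hk hct hsp
    rw [Submodule.smul_mem_iff _ hk] at hsp
    rw [inn_smul, inn_ee]
    exact mul_ne_zero hk (h3 hct i (span_sg_short hstd hsp))
  rintro β ⟨hβ, hsp⟩
  cases ct with
  | D => exact hD β hβ hsp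
  | B =>
    rcases hβ with hβ | ⟨i, rfl | rfl⟩
    · exact hD β hβ hsp
    · have := hS 1 i (by norm_num) (by simp); rw [one_smul] at this; exact this hsp
    · have := hS (-1) i (by norm_num) (by simp); rw [neg_one_smul] at this; exact this hsp
  | C =>
    rcases hβ with hβ | ⟨i, rfl | rfl⟩
    · exact hD β hβ hsp
    · exact hS 2 i (by norm_num) (by simp) hsp
    · have := hS (-2) i (by norm_num) (by simp); rw [neg_smul] at this; exact this hsp

theorem R_comm {n : ℕ} (c : ℝ) {p q : Fin n} (h : p ≠ q) (x : V n) : R c p q x = R c q p x := by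
  funext r
  unfold R
  by_cases h1 : r = p
  · have : r ≠ q := by rw [h1]; exact h
    simp [h1, h]
  · simp [h1]

theorem orb_simple {n : ℕ} {ct : CType} {I : Finset (Fin n)} {p q : Fin n} (h : q.1 = p.1 + 1)
    (hp : p ∈ I) (x : V n) : WIOrb n ct I x (R 1 p q x) := by
  apply Relation.ReflTransGen.single
  refine ⟨p, hp, ?_⟩
  have hq := q.2
  have hne : p ≠ q := by intro e; rw [e] at h; omega
  rw [← sRefl_R (by norm_num) hne]
  congr 1
  unfold alphaR
  rw [dif_pos (by omega : p.1 + 1 < n), one_smul]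
  congr 2
  ext; simp [h]

theorem orb_swap_aux {n : ℕ} {ct : CType} {I : Finset (Fin n)} (d : ℕ) : ∀ (p q : Fin n),
    q.1 = p.1 + d + 1 → (∀ r, p ≤ r → r < q → r ∈ I) → ∀ x : V n,
    WIOrb n ct I x (R 1 p q x) := by
  induction d with
  | zero =>
    intro p q h hI x
    exact orb_simple (by omega) (hI p le_rfl (by rw [Fin.lt_def]; omega)) x
  | succ d ih =>
    intro p q h hI x
    have hq := q.2
    let p' : Fin n := ⟨p.1 + d + 1, by omega⟩
    have hp' : p'.1 = p.1 + d + 1 := rfl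
    have h1 := ih p p' rfl (fun r h1 h2 => hI r h1 (by rw [Fin.lt_def] at *; omega))
    have h2 : p' ∈ I := hI p' (by rw [Fin.le_def]; omega) (by rw [Fin.lt_def]; omega)
    have h3 := orb_simple (ct := ct) (q := q) (by omega) h2
    have : R 1 p q x = R 1 p' q (R 1 p p' (R 1 p' q x)) := by
      have e1 : p ≠ p' := by intro e; rw [Fin.ext_iff] at e; omega
      have e2 : p ≠ q := by intro e; rw [Fin.ext_iff] at e; omega
      have e3 : p' ≠ q := by intro e; rw [Fin.ext_iff] at e; omega
      funext r
      simp only [R]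
      grind
    rw [this]
    exact ((h3 x).trans (h1 _)).trans (h3 _)

theorem orb_swap {n : ℕ} {ct : CType} {I : Finset (Fin n)} {p q : Fin n} (hpq : p ≠ q)
    (hs : sg I p = sg I q) (x : V n) : WIOrb n ct I x (R 1 p q x) := by
  wlog h : p < q generalizing p q
  · rw [R_comm _ hpq]
    exact this hpq.symm hs.symm (lt_of_le_of_ne (not_lt.1 h) hpq.symm)
  exact orb_swap_aux (q.1 - p.1 - 1) p q (by rw [Fin.lt_def] at h; omega)
    ((sg_eq_iff I h).1 hs) x

theorem orb_flip {n : ℕ} {ct : CType} (hct : ct ≠ CType.D) {I : Finset (Fin n)} {p : Fin n}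
    (hs : sg I p = mm I) (x : V n) : WIOrb n ct I x (Function.update x p (-x p)) := by
  have hp := p.2
  have hI := (sg_last I).1 hs
  let q : Fin n := ⟨n - 1, by omega⟩
  have hpq : p ≤ q := by rw [Fin.le_def]; show p.1 ≤ n - 1; omega
  have h3 : ¬ (q.1 + 1 < n) := by show ¬ (n - 1 + 1 < n); omega
  have hq : ∀ x : V n, WIOrb n ct I x (Function.update x q (-x q)) := by
    intro x
    apply Relation.ReflTransGen.single
    refine ⟨q, hI q hpq, ?_⟩
    unfold alphaR
    rw [dif_neg h3]
    cases ct with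
    | B => have := sRefl_ee 1 one_ne_zero q x; rw [one_smul] at this; exact this.symm
    | C => exact (sRefl_ee 2 two_ne_zero q x).symm
    | D => exact absurd rfl hct
  by_cases e : p = q
  · rw [e]; exact hq x
  have hsq : sg I p = sg I q := by
    rw [hs]; symm; rw [sg_last]; intro r hr; exact hI r (hpq.trans hr)
  have : Function.update x p (-x p) = R 1 p q (Function.update (R 1 p q x) q (-(R 1 p q x) q)) := by
    funext r
    simp only [R, Function.update_apply]
    grind
  rw [this]
  exact ((orb_swap e hsq x).trans (hq _)).trans (orb_swap e hsq _)

/-- Double sign flip. -/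
noncomputable def DF {n : ℕ} (p q : Fin n) (x : V n) : V n :=
  fun r => if r = p ∨ r = q then - x r else x r

theorem orb_dflip {n : ℕ} {ct : CType} (hct : ct = CType.D) {I : Finset (Fin n)} {p q : Fin n}
    (hpq : p ≠ q) (hs : sg I p = mm I) (hs' : sg I q = mm I) (x : V n) :
    WIOrb n ct I x (DF p q x) := by
  have hp := p.2
  have hq := q.2
  have hpq' : p.1 ≠ q.1 := fun h => hpq (Fin.ext h)
  let u : Fin n := ⟨n - 1, by omega⟩
  let w : Fin n := ⟨n - 2, by omega⟩
  have huw : w ≠ u := by intro e; rw [Fin.ext_iff] at e; simp [u, w] at e; omega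
  have hI : ∀ r : Fin n, n - 2 ≤ r.1 → r ∈ I := by
    intro r hr
    by_cases h : p.1 ≤ n - 2
    · exact (sg_last I).1 hs r (by rw [Fin.le_def]; omega)
    · exact (sg_last I).1 hs' r (by rw [Fin.le_def]; omega)
  have hu : sg I u = mm I := (sg_last I).2 (fun r hr => hI r (by
    have : n - 1 ≤ r.1 := hr
    omega))
  have hw : sg I w = mm I := (sg_last I).2 (fun r hr => hI r hr)
  have base : ∀ x : V n, WIOrb n ct I x (DF w u x) := by
    intro x
    have h1 : WIOrb n ct I x (R (-1) w u x) := by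
      apply Relation.ReflTransGen.single
      refine ⟨u, hI u (by show n - 2 ≤ n - 1; omega), ?_⟩
      rw [← sRefl_R (by norm_num) huw]
      congr 1
      unfold alphaR
      have : ¬ (u.1 + 1 < n) := by show ¬ (n - 1 + 1 < n); omega
      rw [dif_neg this, neg_one_smul, sub_neg_eq_add]
      subst hct
      rfl
    have : DF w u x = R 1 w u (R (-1) w u x) := by
      funext r
      simp only [R, DF]
      grind
    rw [this]
    exact h1.trans (orb_swap huw (hw.trans hu.symm) _)
  have conj : ∀ a b c : Fin n, sg I a = mm I → sg I b = mm I → a ≠ c → b ≠ c →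
      (∀ x : V n, WIOrb n ct I x (DF a c x)) → ∀ x : V n, WIOrb n ct I x (DF b c x) := by
    intro a b c ha hb hac hbc h x
    by_cases hab : a = b
    · rw [← hab]; exact h x
    have : DF b c x = R 1 a b (DF a c (R 1 a b x)) := by
      funext r
      simp only [R, DF]
      grind
    rw [this]
    exact ((orb_swap hab (ha.trans hb.symm) x).trans (h _)).trans
      (orb_swap hab (ha.trans hb.symm) _)
  have comm : ∀ a b : Fin n, (∀ x : V n, WIOrb n ct I x (DF a b x)) →
      ∀ x : V n, WIOrb n ct I x (DF b a x) := by
    intro a b h x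
    have : DF b a x = DF a b x := by funext r; simp only [DF, or_comm]
    rw [this]; exact h x
  by_cases hpu : p = u
  · have hqu : q ≠ u := fun e => hpq (hpu.trans e.symm)
    have h1 := comm _ _ (conj w q u hw hs' huw hqu base) x
    rwa [← hpu] at h1
  · have h1 := comm _ _ (conj w p u hw hs huw hpu base)
    exact comm _ _ (conj u q p hu hs' (Ne.symm hpu) hpq.symm h1) x

theorem supp_add {n : ℕ} {i j p : Fin n} (h : (ee i + ee j : V n) p ≠ 0) : p = i ∨ p = j := by
  by_contra hc
  push Not at hc
  apply h
  simp [ee_apply, hc.1, hc.2]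

theorem supp_sub {n : ℕ} {i j p : Fin n} (h : (ee i - ee j : V n) p ≠ 0) : p = i ∨ p = j := by
  by_contra hc
  push Not at hc
  apply h
  simp [ee_apply, hc.1, hc.2]

/-- Consequence of being exceptional, types `B`, `C`. -/
theorem excBC_cases {n : ℕ} {ct : CType} {I : Finset (Fin n)} (hstd : StandardI n ct I)
    {shortR : Fin n → V n} (hsh : ∀ i r, shortR i r ≠ 0 → r = i) {x β : V n} {p q : Fin n}
    (hpq : p ≠ q) (hp : β p ≠ 0) (hq : β q ≠ 0) (h : ExcBC n ct I shortR x β) :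
    ∃ s, s < mval n I ∧ 1 ≤ s ∧ ∃ a : ℝ, 0 < a ∧
    nsl n ct I x s 0 + nsl n ct I x (mval n I) a = 1 ∧
    ((sg I p + 1 = s ∧ sg I q + 1 = s ∧ (|x p| = a ∨ |x q| = a)) ∨
     (x p ≠ 0 ∧ x q ≠ 0 ∧ sg I p ≠ sg I q)) := by
  obtain ⟨s, hs1, hsm, a, ha, -, h2, h3⟩ := h
  have hm1 : 1 ≤ mval n I := by omega
  refine ⟨s, hsm, hs1, a, ha, h2, ?_⟩
  rcases h3 with ⟨i, j, hi, hj, hia, hj0, rfl | rfl⟩ | ⟨i, j, hi, hj, hij, rfl | rfl⟩ |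
    ⟨i, j, hi, hj, hij, rfl | rfl⟩
  · exact absurd ((hsh i p hp).trans (hsh i q hq).symm) hpq
  · rw [inSeg_iff hstd hs1 hsm.le] at hi hj
    left
    rcases supp_add hp with rfl | rfl <;> rcases supp_add hq with rfl | rfl
    · exact absurd rfl hpq
    · exact ⟨hi.symm, hj.symm, Or.inl hia⟩
    · exact ⟨hj.symm, hi.symm, Or.inr hia⟩
    · exact absurd rfl hpq
  · exact absurd ((hsh i p hp).trans (hsh i q hq).symm) hpq
  · rw [inSeg_iff hstd hs1 hsm.le] at hi
    rw [inSeg_iff hstd hm1 le_rfl] at hj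
    have hi0 : x i ≠ 0 := by rcases hij with h | h <;> rw [h.1] <;> grind
    have hj0 : x j ≠ 0 := by rcases hij with h | h <;> rw [h.2] <;> grind
    right
    rcases supp_add hp with rfl | rfl <;> rcases supp_add hq with rfl | rfl
    · exact absurd rfl hpq
    · exact ⟨hi0, hj0, by omega⟩
    · exact ⟨hj0, hi0, by omega⟩
    · exact absurd rfl hpq
  · exact absurd ((hsh i p hp).trans (hsh i q hq).symm) hpq
  · rw [inSeg_iff hstd hs1 hsm.le] at hi
    rw [inSeg_iff hstd hm1 le_rfl] at hj
    have hi0 : x i ≠ 0 := by rcases hij with h | h <;> rw [h.1] <;> grind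
    have hj0 : x j ≠ 0 := by rcases hij with h | h <;> rw [h.2] <;> grind
    right
    rcases supp_sub hp with rfl | rfl <;> rcases supp_sub hq with rfl | rfl
    · exact absurd rfl hpq
    · exact ⟨hi0, hj0, by omega⟩
    · exact ⟨hj0, hi0, by omega⟩
    · exact absurd rfl hpq

/-- Consequence of being exceptional, type `D`. -/
theorem excD_cases {n : ℕ} {I : Finset (Fin n)} (hstd : StandardI n CType.D I)
    {x β : V n} {p q : Fin n}
    (hpq : p ≠ q) (hp : β p ≠ 0) (hq : β q ≠ 0) (h : ExcD n I x β) :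
    ∃ j, x j = 0 ∧ sg I j < mm I ∧ (sg I j = sg I p ∨ sg I j = sg I q) ∧
    (sg I p = sg I q ∨ (x p ≠ 0 ∧ x q ≠ 0)) := by
  obtain ⟨s, hs1, hsm, a, ha, -, -, -, -, i, j, k, l, hi, hj, hk, hl, hj0, hl0, h3⟩ := h
  have hm1 : 1 ≤ mval n I := by omega
  rw [inSeg_iff hstd hs1 hsm.le] at hi hj
  rw [inSeg_iff hstd hm1 le_rfl] at hk hl
  have := mval_eq I
  refine ⟨j, hj0, by omega, ?_⟩
  rcases h3 with ⟨hik, rfl | rfl⟩ | ⟨hik, rfl | rfl⟩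
  · rcases supp_add hp with rfl | rfl <;> rcases supp_add hq with rfl | rfl <;>
      exact ⟨by omega, Or.inl (by omega)⟩
  · have hi0 : x i ≠ 0 := by rcases hik with h | h <;> rw [h.1] <;> grind
    have hk0 : x k ≠ 0 := by rcases hik with h | h <;> rw [h.2] <;> grind
    rcases supp_add hp with rfl | rfl <;> rcases supp_add hq with rfl | rfl
    · exact absurd rfl hpq
    · exact ⟨by omega, Or.inr ⟨hi0, hk0⟩⟩
    · exact ⟨by omega, Or.inr ⟨hk0, hi0⟩⟩
    · exact absurd rfl hpq
  · rcases supp_add hp with rfl | rfl <;> rcases supp_add hq with rfl | rfl <;>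
      exact ⟨by omega, Or.inl (by omega)⟩
  · have hi0 : x i ≠ 0 := by rcases hik with h | h <;> rw [h.1] <;> grind
    have hk0 : x k ≠ 0 := by rcases hik with h | h <;> rw [h.2] <;> grind
    rcases supp_sub hp with rfl | rfl <;> rcases supp_sub hq with rfl | rfl
    · exact absurd rfl hpq
    · exact ⟨by omega, Or.inr ⟨hi0, hk0⟩⟩
    · exact ⟨by omega, Or.inr ⟨hk0, hi0⟩⟩
    · exact absurd rfl hpq

theorem exc_cases {n : ℕ} {ct : CType} {I : Finset (Fin n)} (hstd : StandardI n ct I)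
    {x β : V n} {p q : Fin n}
    (hpq : p ≠ q) (hp : β p ≠ 0) (hq : β q ≠ 0) (h : Exc n ct I x β) :
    (ct ≠ CType.D ∧ ∃ s, s < mval n I ∧ 1 ≤ s ∧ ∃ a : ℝ, 0 < a ∧
    nsl n ct I x s 0 + nsl n ct I x (mval n I) a = 1 ∧
    ((sg I p + 1 = s ∧ sg I q + 1 = s ∧ (|x p| = a ∨ |x q| = a)) ∨
     (x p ≠ 0 ∧ x q ≠ 0 ∧ sg I p ≠ sg I q))) ∨
    (ct = CType.D ∧ ∃ j, x j = 0 ∧ sg I j < mm I ∧ (sg I j = sg I p ∨ sg I j = sg I q) ∧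
    (sg I p = sg I q ∨ (x p ≠ 0 ∧ x q ≠ 0))) := by
  cases ct with
  | B =>
    refine Or.inl ⟨by simp, excBC_cases hstd ?_ hpq hp hq h⟩
    intro i r hr
    by_contra hc
    exact hr (by simp [ee_apply, hc])
  | C =>
    refine Or.inl ⟨by simp, excBC_cases hstd ?_ hpq hp hq h⟩
    intro i r hr
    by_contra hc
    exact hr (by simp [ee_apply, hc])
  | D => exact Or.inr ⟨rfl, excD_cases hstd hpq hp hq h⟩

theorem step {n : ℕ} {ct : CType} {I : Finset (Fin n)} (hstd : StandardI n ct I)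
    {x y : V n} (hx : RegP ct I x) (hy : RegP ct I y) {p q : Fin n} (hpq : p ≠ q) {c : ℝ}
    (hc : c = 1 ∨ c = -1) (hyx : y = R c p q x) (hne : y ≠ x)
    (hin : sg I p ≠ sg I q ∨ (c = -1 ∧ sg I p ≠ mm I ∧ sg I q ≠ mm I))
    (hexc : ∀ β : V n, β p ≠ 0 → β q ≠ 0 → ¬ Exc n ct I x β) :
    ConnStep n ct I x y := by
  wlog h : p < q generalizing p q
  · refine this hpq.symm (hyx.trans (R_comm c hpq x)) ?_ (fun β h1 h2 => hexc β h2 h1)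
      (lt_of_le_of_ne (not_lt.1 h) hpq.symm)
    rcases hin with h | h
    · exact Or.inl h.symm
    · exact Or.inr ⟨h.1, h.2.2, h.2.1⟩
  have hcc : c * c = 1 := by rcases hc with rfl | rfl <;> norm_num
  have hc0 : c ≠ 0 := by rcases hc with rfl | rfl <;> norm_num
  have hs : sRefl (ee p - c • ee q) x = y := by rw [sRefl_R hcc hpq, hyx]
  refine ⟨RegI_of_RegP hstd hx, RegI_of_RegP hstd hy, Or.inr ⟨ee p - c • ee q, ?_, ?_⟩⟩
  · unfold LinkedRoot
    rw [if_pos hstd]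
    refine ⟨RegI_of_RegP hstd hx, ⟨?_, ?_⟩, ?_, ?_, ?_, ?_⟩
    · apply DRoots_sub
      refine ⟨p, q, hpq, ?_⟩
      rcases hc with rfl | rfl
      · right; left; rw [one_smul]
      · left; rw [neg_one_smul, sub_neg_eq_add]
    · refine ⟨p, ?_, ?_⟩
      · simp [ee_apply, hpq]
      · intro j hj
        simp [ee_apply, hj.ne, (hj.trans h).ne]
    · rintro ⟨-, hsp⟩
      rcases hc with rfl | rfl
      · rw [one_smul] at hsp
        rcases hin with h1 | h1
        · exact h1 (span_sg_sub hstd hsp)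
        · norm_num at h1
      · rw [neg_one_smul, sub_neg_eq_add] at hsp
        have h1 := span_sg_add hstd hsp
        have h2 : sg I q = mm I := span_sg_add (q := p) hstd (by rwa [add_comm])
        rcases hin with h3 | h3
        · exact h3 (h1.trans h2.symm)
        · exact h3.2.1 h1
    · rw [hs]; exact RegI_of_RegP hstd hy
    · rw [hs]; exact hne
    · apply hexc
      · simp [ee_apply, hpq]
      · simp [ee_apply, hpq.symm, hc0]
  · rw [hs]; exact Relation.ReflTransGen.refl

theorem orbStep {n : ℕ} {ct : CType} {I : Finset (Fin n)} (hstd : StandardI n ct I)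
    {x y : V n} (hx : RegP ct I x) (hy : RegP ct I y) (h : WIOrb n ct I x y) :
    ConnStep n ct I x y :=
  ⟨RegI_of_RegP hstd hx, RegI_of_RegP hstd hy, Or.inl h⟩

/-- Swap of a zero entry with a nonzero one in another segment. -/
theorem stepX {n : ℕ} {ct : CType} {I : Finset (Fin n)} (hstd : StandardI n ct I)
    {x y : V n} (hx : RegP ct I x) (hy : RegP ct I y) {p q : Fin n} (hs : sg I p ≠ sg I q)
    {c : ℝ} (hc : c = 1 ∨ c = -1) (hyx : y = R c p q x) (h0 : x p = 0) (h1 : x q ≠ 0) :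
    ConnStep n ct I x y := by
  have hpq : p ≠ q := fun e => hs (by rw [e])
  refine step hstd hx hy hpq hc hyx ?_ (Or.inl hs) ?_
  · intro e
    have h2 : y p = c * x q := by rw [hyx]; simp [R]
    rw [e, h0] at h2
    rcases hc with rfl | rfl <;> grind
  · intro β hp hq he
    rcases exc_cases hstd hpq hp hq he with ⟨-, s, -, -, a, -, -, h | h⟩ | ⟨-, j, -, -, -, h | h⟩
    · omega
    · exact h.1 h0
    · exact hs h
    · exact h.1 h0

theorem reg_two {n : ℕ} {ct : CType} {I : Finset (Fin n)} {x : V n} (hx : RegP ct I x)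
    {i j : Fin n} {u v : ℝ} (hij : i ≠ j)
    (a1 : ∀ p, p ≠ i → p ≠ j → sg I p = sg I i → x p ≠ u)
    (a2 : ∀ p, p ≠ i → p ≠ j → sg I p = sg I j → x p ≠ v)
    (a3 : sg I i = sg I j → u ≠ v)
    (b1 : sg I i = mm I → ∀ p, p ≠ i → p ≠ j → sg I p = sg I i → x p ≠ -u)
    (b2 : sg I j = mm I → ∀ p, p ≠ i → p ≠ j → sg I p = sg I j → x p ≠ -v)
    (b3 : sg I i = mm I → sg I j = mm I → u ≠ -v)
    (c1 : ct ≠ CType.D → sg I i = mm I → u ≠ 0)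
    (c2 : ct ≠ CType.D → sg I j = mm I → v ≠ 0) :
    RegP ct I (Function.update (Function.update x i u) j v) := by
  obtain ⟨h1, h2, h3⟩ := hx
  have vj : Function.update (Function.update x i u) j v j = v := by simp
  have vi : Function.update (Function.update x i u) j v i = u := by simp [hij]
  have vo : ∀ p, p ≠ i → p ≠ j → Function.update (Function.update x i u) j v p = x p := by
    intro p h h'; simp [h, h']
  generalize Function.update (Function.update x i u) j v = y at *
  have cs : ∀ p, p = i ∨ p = j ∨ (p ≠ i ∧ p ≠ j) := by
    intro p; tauto
  refine ⟨?_, ?_, ?_⟩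
  · intro p q hpq hs
    rcases cs p with rfl | rfl | ⟨hp, hp'⟩ <;> rcases cs q with rfl | rfl | ⟨hq, hq'⟩
    · exact absurd rfl hpq
    · rw [vi, vj]; exact a3 hs
    · rw [vi, vo q hq hq']; exact (a1 q hq hq' hs.symm).symm
    · rw [vi, vj]; exact (a3 hs.symm).symm
    · exact absurd rfl hpq
    · rw [vj, vo q hq hq']; exact (a2 q hq hq' hs.symm).symm
    · rw [vi, vo p hp hp']; exact a1 p hp hp' hs
    · rw [vj, vo p hp hp']; exact a2 p hp hp' hs
    · rw [vo p hp hp', vo q hq hq']; exact h1 p q hpq hs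
  · intro p q hpq hs hs'
    rcases cs p with rfl | rfl | ⟨hp, hp'⟩ <;> rcases cs q with rfl | rfl | ⟨hq, hq'⟩
    · exact absurd rfl hpq
    · rw [vi, vj]; exact b3 hs hs'
    · rw [vi, vo q hq hq']; intro e
      exact b1 hs q hq hq' (hs'.trans hs.symm) (by linarith)
    · rw [vi, vj]; intro e; exact b3 hs' hs (by linarith)
    · exact absurd rfl hpq
    · rw [vj, vo q hq hq']; intro e
      exact b2 hs q hq hq' (hs'.trans hs.symm) (by linarith)
    · rw [vi, vo p hp hp']; exact b1 hs' p hp hp' (hs.trans hs'.symm)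
    · rw [vj, vo p hp hp']; exact b2 hs' p hp hp' (hs.trans hs'.symm)
    · rw [vo p hp hp', vo q hq hq']; exact h2 p q hpq hs hs'
  · intro hct p hs
    rcases cs p with rfl | rfl | ⟨hp, hp'⟩
    · rw [vi]; exact c1 hct hs
    · rw [vj]; exact c2 hct hs
    · rw [vo p hp hp']; exact h3 hct p hs

theorem regT {n : ℕ} {ct : CType} {I : Finset (Fin n)} {x : V n} (hx : RegP ct I x) {i : Fin n}
    (H1 : ∀ p, p ≠ i → sg I p = sg I i → x p ≠ x i ∧ x p ≠ - x i) (hi : x i ≠ 0) :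
    RegP ct I (Function.update x i (-x i)) := by
  obtain ⟨h1, h2, h3⟩ := hx
  refine ⟨?_, ?_, ?_⟩
  · intro p q hpq hs
    simp only [Function.update_apply]
    grind
  · intro p q hpq hs hs'
    simp only [Function.update_apply]
    grind
  · intro hct p hs
    simp only [Function.update_apply]
    grind

theorem caseB {n : ℕ} {ct : CType} {I : Finset (Fin n)} (hstd : StandardI n ct I) {x : V n}
    (hx : RegP ct I x) {i j : Fin n}
    (H1 : ∀ p, p ≠ i → sg I p = sg I i → x p ≠ x i ∧ x p ≠ - x i) (hi : x i ≠ 0)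
    (Z : ∀ p, sg I p = sg I i → x p ≠ 0) (hs : sg I j ≠ sg I i) (hj : x j = 0)
    {c : ℝ} (hc : c = 1 ∨ c = -1)
    (G : ∀ p, p ≠ j → sg I p = sg I j → x p ≠ c * x i)
    (G' : sg I j = mm I → ∀ p, p ≠ j → sg I p = sg I j → x p ≠ - (c * x i))
    (hBC : ct ≠ CType.D → sg I i ≠ mm I) :
    Relation.ReflTransGen (ConnStep n ct I) x (Function.update x i (-x i)) := by
  have hij : i ≠ j := fun e => hs (by rw [e])
  have hT := regT hx H1 hi
  have hcx : c * x i ≠ 0 := mul_ne_zero (by rcases hc with rfl | rfl <;> norm_num) hi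
  have hmu : RegP ct I (R c j i x) := by
    obtain ⟨h1, h2, h3⟩ := hx
    have e1 : R c j i x = Function.update (Function.update x i 0) j (c * x i) := by
      funext r
      simp only [R, Function.update_apply]
      grind
    rw [e1]
    generalize hz : c * x i = z at *
    refine reg_two ⟨h1, h2, h3⟩ hij ?_ ?_ ?_ ?_ ?_ ?_ ?_ ?_ <;> grind
  refine (Relation.ReflTransGen.single (stepX hstd hx hmu hs hc rfl hj hi)).tail
    (stepX (c := -c) hstd hmu hT hs.symm ?_ ?_ ?_ ?_)
  · rcases hc with rfl | rfl <;> norm_num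
  · funext r
    simp only [R, Function.update_apply]
    rcases hc with rfl | rfl <;> grind
  · simp [R, hij, hj]
  · simpa [R] using hcx

theorem caseA {n : ℕ} {ct : CType} {I : Finset (Fin n)} (hstd : StandardI n ct I) {x : V n}
    (hx : RegP ct I x) {i j k : Fin n}
    (H1 : ∀ p, p ≠ i → sg I p = sg I i → x p ≠ x i ∧ x p ≠ - x i) (hi : x i ≠ 0)
    (hj : x j = 0) (hs : sg I j = sg I i) (hsm : sg I i ≠ mm I) (hk : sg I k ≠ sg I i)
    (Z : ∀ p, sg I p = sg I k → x p ≠ 0) {d : ℝ} (hd : d = 1 ∨ d = -1) (hkd : x k = d * x i)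
    (hBC : ct ≠ CType.D → sg I k ≠ mm I) :
    Relation.ReflTransGen (ConnStep n ct I) x (Function.update x i (-x i)) := by
  have hij : i ≠ j := fun e => hi (by rw [e, hj])
  have hjk : j ≠ k := fun e => hk (by rw [← e, hs])
  have hik : i ≠ k := fun e => hk (by rw [← e])
  have hT := regT hx H1 hi
  have e1 : R (-d) j k x = Function.update (Function.update x k 0) j (-x i) := by
    funext r
    simp only [R, Function.update_apply]
    rcases hd with rfl | rfl <;> grind
  have e2 : R d k i (R (-d) j k x) = Function.update (Function.update x i 0) j (-x i) := by
    rw [e1]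
    funext r
    simp only [R, Function.update_apply]
    rcases hd with rfl | rfl <;> grind
  have e3 : Function.update x i (-x i) = R 1 i j (R d k i (R (-d) j k x)) := by
    rw [e2]
    funext r
    simp only [R, Function.update_apply]
    grind
  have hk0 : x k ≠ 0 := Z k rfl
  have hm1 : RegP ct I (R (-d) j k x) := by
    obtain ⟨h1, h2, h3⟩ := hx
    rw [e1]
    refine reg_two ⟨h1, h2, h3⟩ hjk.symm ?_ ?_ ?_ ?_ ?_ ?_ ?_ ?_ <;> grind
  have hm2 : RegP ct I (R d k i (R (-d) j k x)) := by
    obtain ⟨h1, h2, h3⟩ := hx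
    rw [e2]
    refine reg_two ⟨h1, h2, h3⟩ hij ?_ ?_ ?_ ?_ ?_ ?_ ?_ ?_ <;> grind
  refine ((Relation.ReflTransGen.single
    (stepX (c := -d) hstd hx hm1 (by rw [hs]; exact hk.symm) ?_ rfl hj hk0)).tail
    (stepX hstd hm1 hm2 hk hd rfl ?_ ?_)).tail (orbStep hstd hm2 hT ?_)
  · rcases hd with rfl | rfl <;> norm_num
  · rw [e1]; simp [hjk.symm]
  · rw [e1]; simpa [hij, hik] using hi
  · have := orb_swap (ct := ct) hij hs.symm (R d k i (R (-d) j k x))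
    rwa [← e3] at this

theorem caseA_direct {n : ℕ} {ct : CType} {I : Finset (Fin n)} (hstd : StandardI n ct I) {x : V n}
    (hx : RegP ct I x) {i j : Fin n}
    (H1 : ∀ p, p ≠ i → sg I p = sg I i → x p ≠ x i ∧ x p ≠ - x i) (hi : x i ≠ 0)
    (hj : x j = 0) (hs : sg I j = sg I i) (hsm : sg I i ≠ mm I) (hct : ct ≠ CType.D)
    (hn : nsl n ct I x (sg I i + 1) 0 + nsl n ct I x (mval n I) |x i| ≠ 1) :
    Relation.ReflTransGen (ConnStep n ct I) x (Function.update x i (-x i)) := by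
  have hij : i ≠ j := fun e => hi (by rw [e, hj])
  have hT := regT hx H1 hi
  have e1 : R (-1) i j x = Function.update (Function.update x i 0) j (-x i) := by
    funext r
    simp only [R, Function.update_apply]
    grind
  have e3 : Function.update x i (-x i) = R 1 i j (R (-1) i j x) := by
    rw [e1]
    funext r
    simp only [R, Function.update_apply]
    grind
  have hm1 : RegP ct I (R (-1) i j x) := by
    obtain ⟨h1, h2, h3⟩ := hx
    rw [e1]
    refine reg_two ⟨h1, h2, h3⟩ hij ?_ ?_ ?_ ?_ ?_ ?_ ?_ ?_ <;> grind
  refine (Relation.ReflTransGen.single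
    (step hstd hx hm1 hij (Or.inr rfl) rfl ?_ (Or.inr ⟨rfl, hsm, by rwa [hs]⟩) ?_)).tail
    (orbStep hstd hm1 hT ?_)
  · intro e
    have := congrFun e i
    rw [e1] at this
    simp [hij] at this
    exact hi this.symm
  · intro β hp hq he
    rcases exc_cases hstd hij hp hq he with ⟨-, s, -, -, a, ha, h2, h | h⟩ | ⟨h, -⟩
    · obtain ⟨r1, -, r2 | r2⟩ := h
      · rw [r1, r2] at hn; exact hn h2
      · rw [hj, abs_zero] at r2; exact ha.ne r2
    · exact h.2.2 hs.symm
    · exact hct h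
  · have := orb_swap (ct := ct) hij hs.symm (R (-1) i j x)
    rwa [← e3] at this

theorem caseB_D {n : ℕ} {I : Finset (Fin n)} (hstd : StandardI n CType.D I) {x : V n}
    (hx : RegP CType.D I x) {i j k : Fin n}
    (H1 : ∀ p, p ≠ i → sg I p = sg I i → x p ≠ x i ∧ x p ≠ - x i) (hi : x i ≠ 0)
    (Z : ∀ p, sg I p = sg I i → x p ≠ 0) (hj : x j = 0) (hsj : sg I j = mm I)
    (hsk : sg I k = mm I) (hsi : sg I i ≠ mm I) {d : ℝ} (hd : d = 1 ∨ d = -1)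
    (hkd : x k = d * x i) :
    Relation.ReflTransGen (ConnStep n CType.D I) x (Function.update x i (-x i)) := by
  have hk0 : x k ≠ 0 := by rw [hkd]; exact mul_ne_zero (by rcases hd with rfl | rfl <;> norm_num) hi
  have hjk : j ≠ k := fun e => hk0 (by rw [← e, hj])
  have hij : i ≠ j := fun e => hi (by rw [e, hj])
  have hik : i ≠ k := fun e => hsi (by rw [e, hsk])
  have hT := regT hx H1 hi
  have e1 : R (-d) i k x = Function.update (Function.update x i (-x i)) k (-x k) := by
    funext r
    simp only [R, Function.update_apply]
    rcases hd with rfl | rfl <;> grind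
  have e3 : Function.update x i (-x i) = DF k j (R (-d) i k x) := by
    rw [e1]
    funext r
    simp only [DF, Function.update_apply]
    grind
  have hm1 : RegP CType.D I (R (-d) i k x) := by
    obtain ⟨h1, h2, h3⟩ := hx
    rw [e1]
    refine reg_two ⟨h1, h2, h3⟩ hik ?_ ?_ ?_ ?_ ?_ ?_ ?_ ?_ <;> grind
  refine (Relation.ReflTransGen.single
    (step (c := -d) hstd hx hm1 hik ?_ rfl ?_ (Or.inl (by rw [hsk]; exact hsi)) ?_)).tail
    (orbStep hstd hm1 hT ?_)
  · rcases hd with rfl | rfl <;> norm_num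
  · intro e
    have := congrFun e i
    rw [e1] at this
    simp [hik] at this
    grind
  · intro β hp hq he
    rcases exc_cases hstd hik hp hq he with ⟨h, -⟩ | ⟨-, j', h0, h1, h2, -⟩
    · exact h rfl
    · rcases h2 with h2 | h2
      · exact Z j' h2 h0
      · omega
  · have := orb_dflip (ct := CType.D) rfl hjk.symm hsk hsj (R (-d) i k x)
    rwa [← e3] at this

/-- Lemma 4.8 / `cclem2`. -/
theorem statement0 (n : ℕ) (ct : CType) (I J : Finset (Fin n)) (lam lbar : V n)
    (hstd : StandardI n ct I)
    (hint : IntegralW n ct lam) (hreg : RegI n ct I lam)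
    (horb : WOrb n ct lam lbar) (hdom : DominantW n ct lbar)
    (hJ : ∀ i : Fin n, i ∈ J ↔ inn lbar (alphaR n ct i) = 0)
    (i : Fin n) (a : ℝ) (ha : a = |lam i|) (hane : a ≠ 0)
    (s : ℕ) (hs1 : 1 ≤ s) (hsm : s ≤ mval n I) (hseg : InSeg n ct I s i)
    (t : ℕ) (ht1 : 1 ≤ t) (htm : t ≤ mval n I)
    (h1 : nsl n ct I lam s a = 1)
    (h2 : nsl n ct I lam s 0 + nsl n ct I lam t 0 = 1)
    (h3 : 1 ≤ nsl n ct I lam t 0 + nsl n ct I lam t a)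
    (h4 : nsl n ct I lam t 0 + nsl n ct I lam t a ≤ 2) :
    Conn n ct I lam (sRefl (ee i) lam) := by
  subst ha
  have hi : lam i ≠ 0 := abs_ne_zero.1 hane
  have hx := RegP_of_RegI hreg
  have hst : sRefl (ee i) lam = Function.update lam i (-lam i) := by
    have := sRefl_ee 1 one_ne_zero i lam
    rwa [one_smul] at this
  rw [hst]
  have hsi : s = sg I i + 1 := (inSeg_iff hstd hs1 hsm i).1 hseg
  have hmv := mval_eq I
  have f1 := h1
  rw [nsl_eq hstd hs1 hsm, Finset.card_eq_one] at f1
  obtain ⟨i', hi'⟩ := f1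
  have H1 : ∀ p, p ≠ i → sg I p = sg I i → lam p ≠ lam i ∧ lam p ≠ - lam i := by
    intro p hp hs
    have m1 : i ∈ ({i'} : Finset (Fin n)) := by rw [← hi']; simp [hsi]
    have key : |lam p| ≠ |lam i| := by
      intro he
      have m2 : p ∈ ({i'} : Finset (Fin n)) := by rw [← hi']; simp [hsi, hs, he]
      rw [Finset.mem_singleton] at m1 m2
      exact hp (m2.trans m1.symm)
    exact ⟨fun e => key (by rw [e]), fun e => key (by rw [e, abs_neg])⟩
  have hT := regT hx H1 hi
  refine ⟨hreg, RegI_of_RegP hstd hT, ?_⟩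
  have hst' : s ≠ t := by rintro rfl; omega
  have zero : ∀ u, 1 ≤ u → u ≤ mval n I → nsl n ct I lam u 0 = 0 →
      ∀ p, sg I p + 1 = u → lam p ≠ 0 := by
    intro u hu1 hum hu p hp h0
    rw [nsl_eq hstd hu1 hum, Finset.card_eq_zero] at hu
    have : p ∈ (∅ : Finset (Fin n)) := by rw [← hu]; simp [hp, h0]
    simp at this
  have ex : ∀ u, 1 ≤ u → u ≤ mval n I → ∀ b, 1 ≤ nsl n ct I lam u b →
      ∃ p, sg I p + 1 = u ∧ |lam p| = b := by
    intro u hu1 hum b hu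
    rw [nsl_eq hstd hu1 hum] at hu
    obtain ⟨p, hp⟩ := Finset.card_pos.1 hu
    simp only [Finset.mem_filter, Finset.mem_univ, true_and] at hp
    exact ⟨p, hp.1.symm, hp.2⟩
  have sgn : ∀ p, |lam p| = |lam i| → ∃ d : ℝ, (d = 1 ∨ d = -1) ∧ lam p = d * lam i := by
    intro p hp
    rcases abs_eq_abs.1 hp with h | h
    · exact ⟨1, Or.inl rfl, by rw [h, one_mul]⟩
    · exact ⟨-1, Or.inr rfl, by rw [h, neg_one_mul]⟩
  rcases Nat.eq_zero_or_pos (nsl n ct I lam s 0) with hz | hz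
  · -- case B
    have ht0 : nsl n ct I lam t 0 = 1 := by omega
    have Z : ∀ p, sg I p = sg I i → lam p ≠ 0 :=
      fun p hp => zero s hs1 hsm hz p (by rw [hp, hsi])
    obtain ⟨j, hj, hj0⟩ := ex t ht1 htm 0 ht0.ge
    rw [abs_eq_zero] at hj0
    have hji : sg I j ≠ sg I i := by omega
    by_cases hBC : ct ≠ CType.D ∧ sg I i = mm I
    · exact Relation.ReflTransGen.single (orbStep hstd hx hT (orb_flip hBC.1 hBC.2 lam))
    have hBC' : ct ≠ CType.D → sg I i ≠ mm I := fun h e => hBC ⟨h, e⟩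
    rcases Nat.eq_zero_or_pos (nsl n ct I lam t |lam i|) with hta | hta
    · have none : ∀ p, sg I p = sg I j → |lam p| ≠ |lam i| := by
        intro p hp h0
        rw [nsl_eq hstd ht1 htm, Finset.card_eq_zero] at hta
        have : p ∈ (∅ : Finset (Fin n)) := by rw [← hta]; simp [hp, h0, hj]
        simp at this
      refine caseB hstd hx H1 hi Z hji hj0 (Or.inl rfl) ?_ ?_ hBC'
      · intro p _ hp e
        exact none p hp (by rw [e, one_mul])
      · intro _ p _ hp e
        exact none p hp (by rw [e, one_mul, abs_neg])
    · have hta1 : nsl n ct I lam t |lam i| = 1 := by omega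
      obtain ⟨k, hk, hka⟩ := ex t ht1 htm _ hta
      have uniq : ∀ p, sg I p = sg I j → |lam p| = |lam i| → p = k := by
        intro p hp he
        rw [nsl_eq hstd ht1 htm, Finset.card_eq_one] at hta1
        obtain ⟨k', hk'⟩ := hta1
        have m1 : k ∈ ({k'} : Finset (Fin n)) := by rw [← hk']; simp [hk, hka]
        have m2 : p ∈ ({k'} : Finset (Fin n)) := by rw [← hk']; simp [hp, he, hj]
        rw [Finset.mem_singleton] at m1 m2
        exact m2.trans m1.symm
      obtain ⟨d, hd, hkd⟩ := sgn k hka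
      by_cases hjm : sg I j = mm I
      · have hct : ct = CType.D := by
          by_contra hct
          exact hx.2.2 hct j hjm hj0
        subst hct
        exact caseB_D hstd hx H1 hi Z hj0 hjm (by omega) (by omega) hd hkd
      · refine caseB (c := -d) hstd hx H1 hi Z hji hj0 ?_ ?_ (fun h => absurd h hjm) hBC'
        · rcases hd with rfl | rfl <;> norm_num
        · intro p _ hp e
          have : p = k := uniq p hp (by
            rw [e, abs_mul]; rcases hd with rfl | rfl <;> norm_num)
          rw [this, hkd] at e
          rcases hd with rfl | rfl <;> grind
  · -- case A
    have ht0 : nsl n ct I lam t 0 = 0 := by omega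
    obtain ⟨j, hj, hj0⟩ := ex s hs1 hsm 0 hz
    rw [abs_eq_zero] at hj0
    have hji : sg I j = sg I i := by omega
    obtain ⟨k, hk, hka⟩ := ex t ht1 htm |lam i| (by omega)
    obtain ⟨d, hd, hkd⟩ := sgn k hka
    have Z : ∀ p, sg I p = sg I k → lam p ≠ 0 :=
      fun p hp => zero t ht1 htm ht0 p (by rw [hp, hk])
    by_cases him : sg I i = mm I
    · have hct : ct = CType.D := by
        by_contra hct
        exact hx.2.2 hct j (hji.trans him) hj0
      have hij : i ≠ j := fun e => hi (by rw [e, hj0])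
      have := orb_dflip hct hij him (hji.trans him) lam
      have e : DF i j lam = Function.update lam i (-lam i) := by
        funext r
        simp only [DF, Function.update_apply]
        grind
      rw [e] at this
      exact Relation.ReflTransGen.single (orbStep hstd hx hT this)
    · by_cases hBC : ct ≠ CType.D ∧ sg I k = mm I
      · refine caseA_direct hstd hx H1 hi hj0 hji him hBC.1 ?_
        have : mval n I = t := by omega
        rw [this, ← hsi]
        omega
      · exact caseA hstd hx H1 hi hj0 hji him (by omega) Z hd hkd (fun h e => hBC ⟨h, e⟩)

end JantzenBlocks
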